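/- Let Γ be a finitely generated subgroup of the multiplicative group ℂˣ of nonzero complex numbers, and let a, b, c be nonzero complex numbers. The equation a·x + b·y + c·z = 0 is partition regular over Γ if and only if a + b + c = 0 (equivalently, if and only if the equation admits a constant solution x = y = z in Γ). -/

import Mathlib

/-!
If `a + b + c ≠ 0`, then `Γ`, the coefficients and hence `a + b + c` live in a finitely generated
subring `S` of `ℂ`. Finitely generated commutative rings are residually finite: by the Krull
intersection theorem a nonzero element avoids some power of some maximal ideal, and the quotient by
that power is finite because the residue fields are. So some ideal `I` of `S` has finite index and
misses `a + b + c`. Colour `Γ` by residues modulo `I`: a monochromatic solution, whose entries all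
have the same unit residue `u`, would give `(a + b + c) u ≡ 0`.
-/

section ResiduallyFinite

variable {R : Type*} [CommRing R]

theorem isJacobsonRing_of_dimensionLEOne [Ring.DimensionLEOne R]
    (h : (⊥ : Ideal R).jacobson = ⊥) : IsJacobsonRing R := by
  rw [isJacobsonRing_iff_prime_eq]
  intro P hP
  obtain rfl | hP_ne := eq_or_ne P ⊥
  · exact h
  · have := hP.isMaximal hP_ne
    exact Ideal.jacobson_eq_self_of_isMaximal

theorem jacobson_bot_int : (⊥ : Ideal ℤ).jacobson = ⊥ := by
  refine eq_bot_iff.2 fun n hn ↦ Ideal.mem_bot.2 ?_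
  have hunit : IsUnit (n * 3 + 1) := Ideal.mem_jacobson_bot.1 hn 3
  obtain h | h := Int.isUnit_iff.1 hunit <;> omega

instance isJacobsonRing_int : IsJacobsonRing ℤ :=
  isJacobsonRing_of_dimensionLEOne jacobson_bot_int

theorem finite_of_finiteType_int (K : Type*) [Field K] [hℤ : Algebra ℤ K]
    [Algebra.FiniteType ℤ K] : Finite K := by
  obtain rfl : hℤ = Ring.toIntAlgebra K := Subsingleton.elim _ _
  have : Module.Finite ℤ K := finite_of_finite_type_of_isJacobsonRing ℤ K
  have hℤK : ¬ Function.Injective (algebraMap ℤ K) := fun hinj ↦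
    Int.not_isField (isField_of_isIntegral_of_isField hinj (Field.toIsField K))
  obtain ⟨n, hnK, hn⟩ : ∃ n : ℤ, algebraMap ℤ K n = 0 ∧ n ≠ 0 := by
    simpa only [injective_iff_map_eq_zero, not_forall, exists_prop] using hℤK
  refine Module.finite_of_fg_torsion K fun x ↦ ⟨⟨n, mem_nonZeroDivisors_of_ne_zero hn⟩, ?_⟩
  change n • x = 0
  rw [Algebra.smul_def, hnK, zero_mul]

theorem exists_isMaximal_notMem_pow [IsNoetherianRing R] {s : R} (hs : s ≠ 0) :
    ∃ m : Ideal R, m.IsMaximal ∧ ∃ k, s ∉ m ^ k := by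
  have hann : (Ideal.span {s}).annihilator ≠ ⊤ := by
    simpa [Submodule.annihilator_eq_top_iff] using hs
  obtain ⟨m, hm, hann_le⟩ := Ideal.exists_le_maximal _ hann
  refine ⟨m, hm, not_forall.1 fun hpow ↦ ?_⟩
  -- By the Krull intersection theorem an element of every `m ^ k` is fixed by some `r ∈ m`.
  obtain ⟨⟨r, hr⟩, hrs⟩ := (m.mem_iInf_smul_pow_eq_bot_iff s).1 (by simpa using hpow)
  have hsub : 1 - r ∈ m := hann_le <| by
    rw [Submodule.mem_annihilator_span_singleton, sub_smul, one_smul, sub_eq_zero]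
    exact hrs.symm
  exact m.ne_top_iff_one.1 hm.ne_top (by simpa using m.add_mem hsub hr)

theorem exists_finite_quotient_notMem [Algebra.FiniteType ℤ R] {s : R} (hs : s ≠ 0) :
    ∃ I : Ideal R, Finite (R ⧸ I) ∧ s ∉ I := by
  have : IsNoetherianRing R := Algebra.FiniteType.isNoetherianRing ℤ R
  obtain ⟨m, hm, k, hk⟩ := exists_isMaximal_notMem_pow hs
  let _ : Field (R ⧸ m) := Ideal.Quotient.field m
  have : Algebra.FiniteType ℤ (R ⧸ m) :=
    .of_surjective (Ideal.Quotient.mkₐ ℤ m) (Ideal.Quotient.mkₐ_surjective ℤ m)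
  have : Finite (R ⧸ m) := finite_of_finiteType_int (R ⧸ m)
  exact ⟨m ^ k, Ideal.finite_quotient_pow (IsNoetherian.noetherian m) k, hk⟩

end ResiduallyFinite

theorem exists_fg_subalgebra_subset_and_forall_map_mem (R : Type*) {A M : Type*} [CommSemiring R]
    [Semiring A] [Algebra R A] [Monoid M] [Monoid.FG M] (φ : M →* A) {t : Set A} (ht : t.Finite) :
    ∃ S : Subalgebra R A, S.FG ∧ t ⊆ S ∧ ∀ g, φ g ∈ S := by
  obtain ⟨s, hs⟩ := Monoid.FG.fg_top (M := M)
  have hfin : (t ∪ φ '' s).Finite := ht.union (s.finite_toSet.image φ)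
  refine ⟨Algebra.adjoin R (t ∪ φ '' s), Subalgebra.fg_def.2 ⟨_, hfin, rfl⟩,
    Set.subset_union_left.trans Algebra.subset_adjoin, fun g ↦ ?_⟩
  have hle : Submonoid.closure (s : Set M) ≤
      (Algebra.adjoin R (t ∪ φ '' s)).toSubmonoid.comap φ :=
    Submonoid.closure_le.2 fun x hx ↦
      Algebra.subset_adjoin (Set.mem_union_right t (Set.mem_image_of_mem φ hx))
  exact hle (hs ▸ Submonoid.mem_top g)

/-- The linear equation `∑ i, a i * x i = 0` is partition regular over `G`, whose elements are
regarded as elements of `R` through `φ`: every finite colouring of `G` admits a monochromatic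
solution. A subgroup of `Rˣ` is covered by taking for `φ` its inclusion into `R`. -/
def IsPartitionRegular {G R ι : Type*} [Monoid G] [Semiring R] [Fintype ι] (φ : G →* R)
    (a : ι → R) : Prop :=
  ∀ (r : ℕ) (col : G → Fin r), ∃ x : ι → G,
    (∀ i j, col (x i) = col (x j)) ∧ ∑ i, a i * φ (x i) = 0

namespace IsPartitionRegular

section Semiring

variable {G R ι : Type*} [Monoid G] [Semiring R] [Fintype ι] {φ : G →* R} {a : ι → R}

theorem of_sum_eq_zero (φ : G →* R) (ha : ∑ i, a i = 0) : IsPartitionRegular φ a :=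
  fun _ _ ↦ ⟨1, fun _ _ ↦ rfl, by simpa using ha⟩

theorem exists_monochromatic {κ : Type*} [Finite κ] (h : IsPartitionRegular φ a) (col : G → κ) :
    ∃ x : ι → G, (∀ i j, col (x i) = col (x j)) ∧ ∑ i, a i * φ (x i) = 0 := by
  obtain ⟨r, ⟨e⟩⟩ := Finite.exists_equiv_fin κ
  simpa using h r (e ∘ col)

theorem of_comp_injective {S : Type*} [Semiring S] {f : R →+* S} (hf : Function.Injective f)
    (h : IsPartitionRegular ((f : R →* S).comp φ) (f ∘ a)) : IsPartitionRegular φ a := by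
  intro r col
  obtain ⟨x, hx, hsum⟩ := h r col
  exact ⟨x, hx, hf (by simpa using hsum)⟩

theorem vec_three_iff {a b c : R} :
    IsPartitionRegular φ ![a, b, c] ↔ ∀ (r : ℕ) (col : G → Fin r), ∃ x y z : G,
      col x = col y ∧ col y = col z ∧ a * φ x + b * φ y + c * φ z = 0 := by
  refine forall₂_congr fun r col ↦ ⟨fun ⟨x, hx, hsum⟩ ↦ ?_, fun ⟨x, y, z, hxy, hyz, hsum⟩ ↦ ?_⟩
  · exact ⟨x 0, x 1, x 2, hx 0 1, hx 1 2, by simpa [Fin.sum_univ_three] using hsum⟩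
  · refine ⟨![x, y, z], ?_, by simpa [Fin.sum_univ_three] using hsum⟩
    simp [Fin.forall_fin_succ, hxy, hyz]

end Semiring

variable {G R ι : Type*} [Group G] [CommRing R] [Fintype ι] {φ : G →* R} {a : ι → R}

theorem sum_mem_of_finite_quotient (h : IsPartitionRegular φ a) (I : Ideal R) [Finite (R ⧸ I)] :
    ∑ i, a i ∈ I := by
  obtain ⟨x, hx, hsum⟩ := h.exists_monochromatic fun g ↦ Ideal.Quotient.mk I (φ g)
  obtain hι | ⟨⟨i₀⟩⟩ := isEmpty_or_nonempty ι
  · simp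
  have hunit : IsUnit (Ideal.Quotient.mk I (φ (x i₀))) :=
    ((Group.isUnit (x i₀)).map φ).map (Ideal.Quotient.mk I)
  rw [← Ideal.Quotient.eq_zero_iff_mem, ← hunit.mul_left_eq_zero]
  calc Ideal.Quotient.mk I (∑ i, a i) * Ideal.Quotient.mk I (φ (x i₀))
      = ∑ i, Ideal.Quotient.mk I (a i) * Ideal.Quotient.mk I (φ (x i)) := by
        simp only [map_sum, Finset.sum_mul, hx _ i₀]
    _ = Ideal.Quotient.mk I (∑ i, a i * φ (x i)) := by simp only [map_sum, map_mul]
    _ = 0 := by rw [hsum, map_zero]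

theorem sum_eq_zero_of_finiteType [Algebra.FiniteType ℤ R] (h : IsPartitionRegular φ a) :
    ∑ i, a i = 0 := by
  by_contra hne
  obtain ⟨I, hI, hnotMem⟩ := exists_finite_quotient_notMem hne
  exact hnotMem (h.sum_mem_of_finite_quotient I)

theorem sum_eq_zero [Group.FG G] (h : IsPartitionRegular φ a) : ∑ i, a i = 0 := by
  have : Monoid.FG G := Group.fg_iff_monoid_fg.1 ‹_›
  obtain ⟨S, hS, ha, hφ⟩ :=
    exists_fg_subalgebra_subset_and_forall_map_mem ℤ φ (Set.finite_range a)
  let aS : ι → S := fun i ↦ ⟨a i, ha ⟨i, rfl⟩⟩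
  have : Algebra.FiniteType ℤ S := S.fg_iff_finiteType.1 hS
  have hPR : IsPartitionRegular (φ.codRestrict S hφ) aS :=
    of_comp_injective (f := S.val.toRingHom) Subtype.val_injective h
  simpa [aS] using congrArg S.val hPR.sum_eq_zero_of_finiteType

end IsPartitionRegular

theorem stmt_9_general {G R ι : Type*} [Group G] [Group.FG G] [CommRing R] [Fintype ι]
    (φ : G →* R) (a : ι → R) : IsPartitionRegular φ a ↔ ∑ i, a i = 0 :=
  ⟨IsPartitionRegular.sum_eq_zero, IsPartitionRegular.of_sum_eq_zero φ⟩

/-- For a finitely generated multiplicative subgroup `Γ` of `ℂˣ` and nonzero complex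
numbers `a`, `b`, `c`, the equation `a·x + b·y + c·z = 0` is partition regular over `Γ`
if and only if `a + b + c = 0`. -/
theorem stmt_9 (Γ : Subgroup ℂˣ) (hΓ : Γ.FG) (a b c : ℂ)
    (ha : a ≠ 0) (hb : b ≠ 0) (hc : c ≠ 0) :
    (∀ (r : ℕ) (col : Γ → Fin r), ∃ x y z : Γ,
        col x = col y ∧ col y = col z ∧
        a * ((x : ℂˣ) : ℂ) + b * ((y : ℂˣ) : ℂ) + c * ((z : ℂˣ) : ℂ) = 0) ↔
      a + b + c = 0 := by
  have : Group.FG Γ := (Group.fg_iff_subgroup_fg Γ).2 hΓ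
  simpa [IsPartitionRegular.vec_three_iff, Fin.sum_univ_three] using
    stmt_9_general ((Units.coeHom ℂ).comp Γ.subtype) ![a, b, c]
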